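/- Let p = 5 and let u be twice differentiable on (0,1) and satisfy (1−ρ²)u''(ρ) + (2/ρ − 3ρ)u'(ρ) − (3/4)u(ρ) + u(ρ)⁵ = 0 for all ρ ∈ (0,1). Then the function Q(ρ) = (1/2)(1−ρ²)ρ³u'(ρ)² + (1/2)ρ²(1−ρ²)u(ρ)u'(ρ) − (1/8)ρ³u(ρ)² + (1/6)ρ³u(ρ)⁶ is constant on (0,1). -/

import Mathlib

open Set Real Filter

/-- The exponent `α = 2/(p-1)`. -/
noncomputable def alphaP (p : ℕ) : ℝ := 2 / ((p : ℝ) - 1)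

/-- `b₀ = (2(p+1)/(p-1)²)^(1/(p-1))`, the constant solution. -/
noncomputable def bZero (p : ℕ) : ℝ :=
  (2 * ((p : ℝ) + 1) / ((p : ℝ) - 1) ^ 2) ^ ((1 : ℝ) / ((p : ℝ) - 1))

/-- `b∞ = (2(p-3)/(p-1)²)^(1/(p-1))`. -/
noncomputable def bInfty (p : ℕ) : ℝ :=
  (2 * ((p : ℝ) - 3) / ((p : ℝ) - 1) ^ 2) ^ ((1 : ℝ) / ((p : ℝ) - 1))

/-- The singular static solution `u∞(ρ) = b∞ ρ^(-α)`. -/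
noncomputable def uInfty (p : ℕ) (ρ : ℝ) : ℝ := bInfty p * ρ ^ (-(alphaP p))

/-- The self-similar profile equation
`(1-ρ²)u'' + (2/ρ - (2+2α)ρ)u' - α(α+1)u + u^p = 0` at the point `ρ`. -/
def ProfileEq (p : ℕ) (u : ℝ → ℝ) (ρ : ℝ) : Prop :=
  (1 - ρ ^ 2) * deriv (deriv u) ρ + (2 / ρ - (2 + 2 * alphaP p) * ρ) * deriv u ρ
    - alphaP p * (alphaP p + 1) * u ρ + u ρ ^ p = 0

/-- For `p = 5`, the Kavian–Weissler functional
`Q = (1/2)(1-ρ²)ρ³u'² + (1/2)ρ²(1-ρ²)uu' - (1/8)ρ³u² + (1/6)ρ³u⁶`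
is a first integral on `(0,1)`. -/
theorem kwQ_first_integral_p5 (u : ℝ → ℝ)
    (hdiff : ∀ ρ ∈ Ioo (0 : ℝ) 1, DifferentiableAt ℝ u ρ)
    (hdiff2 : ∀ ρ ∈ Ioo (0 : ℝ) 1, DifferentiableAt ℝ (deriv u) ρ)
    (heq : ∀ ρ ∈ Ioo (0 : ℝ) 1,
      (1 - ρ ^ 2) * deriv (deriv u) ρ + (2 / ρ - 3 * ρ) * deriv u ρ
        - (3 / 4) * u ρ + u ρ ^ 5 = 0) :
    ∀ ρ₁ ∈ Ioo (0 : ℝ) 1, ∀ ρ₂ ∈ Ioo (0 : ℝ) 1,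
      (fun ρ => (1 / 2) * (1 - ρ ^ 2) * ρ ^ 3 * (deriv u ρ) ^ 2
        + (1 / 2) * ρ ^ 2 * (1 - ρ ^ 2) * u ρ * deriv u ρ
        - (1 / 8) * ρ ^ 3 * (u ρ) ^ 2 + (1 / 6) * ρ ^ 3 * u ρ ^ 6) ρ₁ =
      (fun ρ => (1 / 2) * (1 - ρ ^ 2) * ρ ^ 3 * (deriv u ρ) ^ 2
        + (1 / 2) * ρ ^ 2 * (1 - ρ ^ 2) * u ρ * deriv u ρ
        - (1 / 8) * ρ ^ 3 * (u ρ) ^ 2 + (1 / 6) * ρ ^ 3 * u ρ ^ 6) ρ₂ := by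
  intro a ha b hb
  have key : ∀ ρ ∈ Ioo (0 : ℝ) 1, HasDerivAt (fun ρ => (1 / 2) * (1 - ρ ^ 2) * ρ ^ 3 * (deriv u ρ) ^ 2
        + (1 / 2) * ρ ^ 2 * (1 - ρ ^ 2) * u ρ * deriv u ρ
        - (1 / 8) * ρ ^ 3 * (u ρ) ^ 2 + (1 / 6) * ρ ^ 3 * u ρ ^ 6) 0 ρ := by
    intro ρ hρ
    have h0 : ρ ≠ 0 := ne_of_gt hρ.1
    have hu := (hdiff ρ hρ).hasDerivAt
    have hv := (hdiff2 ρ hρ).hasDerivAt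
    have hi := hasDerivAt_id' ρ
    have e := heq ρ hρ
    have h1 := (hi.fun_pow 2).const_sub 1
    have h3 := hi.fun_pow 3
    have H := (((((h1.const_mul (1 / 2)).fun_mul h3).fun_mul (hv.fun_pow 2)).fun_add
      (((((hi.fun_pow 2).const_mul (1 / 2)).fun_mul h1).fun_mul hu).fun_mul hv)).fun_sub
      ((h3.const_mul (1 / 8)).fun_mul (hu.fun_pow 2))).fun_add
      ((h3.const_mul (1 / 6)).fun_mul (hu.fun_pow 6))
    refine H.congr_deriv ?_
    have hr : ρ * (2 / ρ) = 2 := by field_simp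
    generalize 2 / ρ = r at e hr
    norm_num
    linear_combination (ρ ^ 3 * deriv u ρ + ρ ^ 2 * u ρ / 2) * e
      - (ρ ^ 2 * deriv u ρ ^ 2 + ρ * u ρ * deriv u ρ / 2) * hr
  refine isOpen_Ioo.is_const_of_deriv_eq_zero isPreconnected_Ioo
    (fun x hx => (key x hx).differentiableAt.differentiableWithinAt)
    (fun x hx => (key x hx).deriv) ha hb
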